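/- arXiv:2605.08134 — 2 statements merged into one kernel-verified Lean document; each statement's English description precedes it below -/
import Mathlib

section
/- (KV-reuse error under staleness.) Let W_Q ∈ ℝ^{d×d} be invertible with condition number κ = κ(W_Q), let τ ∈ [0, 2), and set τ̃ = 2 τ κ² / (2 + τ (κ² − 1)). Let W_K, W_V, W_O ∈ ℝ^{d×d}, W_U ∈ ℝ^{d×d_int}, W_D ∈ ℝ^{d_int×d}, E ∈ ℝ^{m×d}, and let σ : ℝ → ℝ be G_σ-Lipschitz, applied entrywise. Let X⁰, …, X^t ∈ ℝ^{B×d} be matrices whose rows all have ℓ² norm 1, and for each token i ∈ {1, …, B} let δ_i ∈ {0, …, t} be a staleness such that for every step s with t − δ_i < s ≤ t the cosine similarity of x_i^s W_Q and x_i^{s−1} W_Q is at least 1 − τ. Define the stale cache K̂, V̂ ∈ ℝ^{B×d} by (K̂)_i = x_i^{t−δ_i} W_K and (V̂)_i = x_i^{t−δ_i} W_V. For each i set q_i = x_i^t W_Q, o_i = softmax(q_i (X^t W_K)ᵀ / √d)(X^t W_V) W_O, ô_i = softmax(q_i K̂ᵀ / √d) V̂ W_O, p_i = softmax(σ(o_i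 W_U) W_D Eᵀ), p̂_i = softmax(σ(ô_i W_U) W_D Eᵀ). Then Σ_{i=1}^B ‖p_i − p̂_i‖₁ ≤ √(2 τ̃) · B · ‖E‖_{2→∞} ‖W_D‖₂ G_σ ‖W_U‖₂ ‖W_O‖₂ ( ‖W_V‖₂ + ‖W_V‖₂ ‖W_Q‖₂ ‖W_K‖₂ / √d ) · ‖Δ‖₂, where Δ = (δ_1, …, δ_B) and ‖Δ‖₂ = √(Σ_i δ_i²). -/
/-! The estimate is a chain of Lipschitz bounds, two of which need an idea.

* *Angle distortion* (`angle_step`). For unit vectors `x, y` with `c = ⟨x, y⟩`, images `u = x W`,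
  `v = y W` of lengths `a, b`, and `P = ⟨u, v⟩`, applying `W⁻¹` to `b u - a v` gives
  `1 - c ≤ ‖W⁻¹‖² (a b - P)`, while applying `W` to `x + y` gives `a b + P ≤ ‖W‖² (1 + c)`; both use
  `2 a b ≤ a² + b²`. If `P ≥ (1 - τ) a b`, these combine to
  `(1 - c) (2 - τ) ≤ τ κ² (1 + c)`, that is `‖x - y‖² = 2 (1 - c) ≤ 2 τ̃`. Telescoping over
  the stale steps gives `‖x_j^t - x_j^{t-δ_j}‖ ≤ δ_j √(2 τ̃) ≤ ‖Δ‖₂ √(2 τ̃)` for every token `j`.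
* *Softmax is 1-Lipschitz from `ℓ^∞` to `ℓ¹`* (`softmax_l1`). Splitting the indices according
  to the sign of `p_j - q_j` reduces this to two-point distributions, where it is the
  inequality `tanh (ε/2) ≤ ε/2`.

The attention output is then perturbed by at most `‖W_V‖ D` through the values (weights sum to
`1`) and `‖W_V‖ ‖W_Q‖ ‖W_K‖ D / √d` through the weights, where `D = √(2 τ̃) ‖Δ‖₂`; the
remaining maps `W_O`, `W_U`, `σ`, `W_D`, `E` and the final softmax contribute their operator norms.
-/

open scoped BigOperators
open Matrix

/-- Softmax of a vector. -/
noncomputable def softmax {n : ℕ} (z : Fin n → ℝ) : Fin n → ℝ :=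
  fun j => Real.exp (z j) / ∑ k, Real.exp (z k)

/-- ℓ¹ norm. -/
noncomputable def l1 {n : ℕ} (v : Fin n → ℝ) : ℝ := ∑ j, |v j|

/-- ℓ² (Euclidean) norm. -/
noncomputable def l2 {n : ℕ} (v : Fin n → ℝ) : ℝ := Real.sqrt (∑ j, v j ^ 2)

/-- ℓ^∞ norm. -/
noncomputable def linf {n : ℕ} (v : Fin n → ℝ) : ℝ := ⨆ j, |v j|

/-- Spectral norm (operator ℓ²→ℓ² norm) of a matrix acting on row vectors. -/
noncomputable def spec {m n : ℕ} (W : Matrix (Fin m) (Fin n) ℝ) : ℝ :=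
  sSup {c | ∃ x : Fin m → ℝ, l2 x ≤ 1 ∧ c = l2 (x ᵥ* W)}

/-- Frobenius norm of a matrix. -/
noncomputable def frob {m n : ℕ} (W : Matrix (Fin m) (Fin n) ℝ) : ℝ :=
  Real.sqrt (∑ i, ∑ j, W i j ^ 2)

/-- Operator norm of `h ↦ h Eᵀ` from ℓ² to ℓ¹. -/
noncomputable def opNorm21 {m d : ℕ} (E : Matrix (Fin m) (Fin d) ℝ) : ℝ :=
  sSup {c | ∃ h : Fin d → ℝ, l2 h ≤ 1 ∧ c = l1 (h ᵥ* Eᵀ)}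

/-- Operator norm of `h ↦ h Eᵀ` from ℓ² to ℓ^∞. -/
noncomputable def opNorm2inf {m d : ℕ} (E : Matrix (Fin m) (Fin d) ℝ) : ℝ :=
  sSup {c | ∃ h : Fin d → ℝ, l2 h ≤ 1 ∧ c = linf (h ᵥ* Eᵀ)}

/-- Condition number `κ(W) = σ_max(W)/σ_min(W)` of an invertible matrix,
expressed as `σ_max(W) · σ_max(W⁻¹)`. -/
noncomputable def condNum {d : ℕ} (W : Matrix (Fin d) (Fin d) ℝ) : ℝ := spec W * spec W⁻¹

/-- Output distribution of the attention block followed by the MLP and softmax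
head, for a single query `q` against (possibly stale) keys `K` and values `V`. -/
noncomputable def reuseP {B d dint m : ℕ}
    (WO : Matrix (Fin d) (Fin d) ℝ)
    (WU : Matrix (Fin d) (Fin dint) ℝ) (WD : Matrix (Fin dint) (Fin d) ℝ)
    (E : Matrix (Fin m) (Fin d) ℝ) (σ : ℝ → ℝ)
    (q : Fin d → ℝ) (K V : Matrix (Fin B) (Fin d) ℝ) : Fin m → ℝ :=
  let a : Fin B → ℝ := softmax (fun j => (q ᵥ* Kᵀ) j / Real.sqrt d)
  let o : Fin d → ℝ := (a ᵥ* V) ᵥ* WO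
  let h : Fin d → ℝ := (fun k => σ ((o ᵥ* WU) k)) ᵥ* WD
  softmax (h ᵥ* Eᵀ)

/-! ### The ℓ² norm -/

lemma l2_eq_norm {n : ℕ} (v : Fin n → ℝ) : l2 v = ‖WithLp.toLp 2 v‖ := by
  simp [l2, EuclideanSpace.norm_eq]

lemma l2_nonneg {n : ℕ} (v : Fin n → ℝ) : 0 ≤ l2 v := Real.sqrt_nonneg _

lemma l2_sq {n : ℕ} (v : Fin n → ℝ) : l2 v ^ 2 = ∑ j, v j ^ 2 :=
  Real.sq_sqrt (Finset.sum_nonneg fun _ _ => sq_nonneg _)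

lemma l2_smul {n : ℕ} (c : ℝ) (v : Fin n → ℝ) : l2 (c • v) = |c| * l2 v := by
  rw [l2_eq_norm, l2_eq_norm, WithLp.toLp_smul, norm_smul, Real.norm_eq_abs]

lemma l2_add_le {n : ℕ} (u v : Fin n → ℝ) : l2 (u + v) ≤ l2 u + l2 v := by
  simp only [l2_eq_norm, WithLp.toLp_add]
  exact norm_add_le _ _

lemma l2_eq_zero {n : ℕ} {v : Fin n → ℝ} (h : l2 v = 0) : v = 0 := by
  rw [l2_eq_norm, norm_eq_zero] at h
  simpa using h

lemma l2_vecMul_rows {n k : ℕ} (a : Fin n → ℝ) (M : Matrix (Fin n) (Fin k) ℝ) :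
    l2 (a ᵥ* M) ≤ ∑ j, |a j| * l2 (M j) := by
  have h : a ᵥ* M = ∑ j, a j • M j := by
    ext k
    simp [Matrix.vecMul, dotProduct, Finset.sum_apply]
  rw [h, l2_eq_norm, WithLp.toLp_sum]
  refine (norm_sum_le _ _).trans (le_of_eq ?_)
  refine Finset.sum_congr rfl fun j _ => ?_
  rw [← l2_eq_norm, l2_smul]

lemma abs_dot_le {n : ℕ} (u v : Fin n → ℝ) : |∑ j, u j * v j| ≤ l2 u * l2 v := by
  apply abs_le_of_sq_le_sq _ (mul_nonneg (l2_nonneg _) (l2_nonneg _))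
  rw [mul_pow, l2_sq, l2_sq]
  exact Finset.sum_mul_sq_le_sq_mul_sq _ _ _

lemma abs_le_l2 {n : ℕ} (v : Fin n → ℝ) (j : Fin n) : |v j| ≤ l2 v := by
  apply Real.abs_le_sqrt
  exact Finset.single_le_sum (f := fun j => v j ^ 2) (fun _ _ => sq_nonneg _) (Finset.mem_univ j)

lemma l2_lin_sq {n : ℕ} (α β : ℝ) (u v : Fin n → ℝ) :
    l2 (α • u + β • v) ^ 2
      = α ^ 2 * l2 u ^ 2 + β ^ 2 * l2 v ^ 2 + 2 * α * β * ∑ j, u j * v j := by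
  simp only [l2_sq, Finset.mul_sum, ← Finset.sum_add_distrib]
  refine Finset.sum_congr rfl fun j _ => ?_
  simp only [Pi.add_apply, Pi.smul_apply, smul_eq_mul]
  ring

/-! ### Operator norms -/

/-- A positively homogeneous function bounded by a multiple of `l2` is bounded by `l2` times its
supremum over the unit ball. -/
lemma le_sSup_mul {n : ℕ} (N : (Fin n → ℝ) → ℝ) (C : ℝ) (hC0 : 0 ≤ C)
    (hC : ∀ x, N x ≤ C * l2 x)
    (hN : ∀ c : ℝ, 0 ≤ c → ∀ x, N (c • x) = c * N x) (x : Fin n → ℝ) :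
    N x ≤ sSup {c | ∃ x : Fin n → ℝ, l2 x ≤ 1 ∧ c = N x} * l2 x := by
  rcases (l2_nonneg x).eq_or_lt with h | h
  · have := hC x
    rw [← h] at this ⊢
    simpa using this
  · have hb : BddAbove {c | ∃ x : Fin n → ℝ, l2 x ≤ 1 ∧ c = N x} := by
      refine ⟨C, ?_⟩
      rintro _ ⟨y, hy, rfl⟩
      exact (hC y).trans (mul_le_of_le_one_right hC0 hy)
    have hmem : (l2 x)⁻¹ * N x ∈ {c | ∃ x : Fin n → ℝ, l2 x ≤ 1 ∧ c = N x} := by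
      refine ⟨(l2 x)⁻¹ • x, ?_, (hN _ (inv_nonneg.2 h.le) x).symm⟩
      rw [l2_smul, abs_of_nonneg (inv_nonneg.2 h.le), inv_mul_cancel₀ h.ne']
    have := le_csSup hb hmem
    rwa [inv_mul_le_iff₀ h, mul_comm] at this

lemma l2_vecMul_le_frob {m n : ℕ} (W : Matrix (Fin m) (Fin n) ℝ) (x : Fin m → ℝ) :
    l2 (x ᵥ* W) ≤ frob W * l2 x := by
  have hf0 : 0 ≤ frob W := Real.sqrt_nonneg _
  apply le_of_sq_le_sq _ (mul_nonneg hf0 (l2_nonneg _))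
  have hf : frob W ^ 2 = ∑ i, ∑ j, W i j ^ 2 := Real.sq_sqrt (by positivity)
  rw [mul_pow, l2_sq, l2_sq, hf, Finset.sum_comm, Finset.sum_mul]
  refine Finset.sum_le_sum fun j _ => ?_
  rw [mul_comm]
  exact Finset.sum_mul_sq_le_sq_mul_sq Finset.univ x fun i => W i j

lemma spec_bound {m n : ℕ} (W : Matrix (Fin m) (Fin n) ℝ) (x : Fin m → ℝ) :
    l2 (x ᵥ* W) ≤ spec W * l2 x := by
  refine le_sSup_mul (fun x => l2 (x ᵥ* W)) (frob W) (Real.sqrt_nonneg _)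
    (l2_vecMul_le_frob W) (fun c hc x => ?_) x
  simp only [Matrix.smul_vecMul, l2_smul, abs_of_nonneg hc]

lemma spec_nonneg {m n : ℕ} (W : Matrix (Fin m) (Fin n) ℝ) : 0 ≤ spec W := by
  apply Real.sSup_nonneg
  rintro _ ⟨x, -, rfl⟩
  exact l2_nonneg _

lemma linf_nonneg {n : ℕ} (v : Fin n → ℝ) : 0 ≤ linf v :=
  Real.iSup_nonneg fun _ => abs_nonneg _

lemma abs_le_linf {n : ℕ} (v : Fin n → ℝ) (j : Fin n) : |v j| ≤ linf v :=
  le_ciSup (f := fun j => |v j|) (Set.finite_range _).bddAbove j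

lemma opNorm2inf_nonneg {m d : ℕ} (E : Matrix (Fin m) (Fin d) ℝ) : 0 ≤ opNorm2inf E := by
  apply Real.sSup_nonneg
  rintro _ ⟨x, -, rfl⟩
  exact linf_nonneg _

lemma opNorm2inf_bound {m d : ℕ} (E : Matrix (Fin m) (Fin d) ℝ) (h : Fin d → ℝ) :
    linf (h ᵥ* Eᵀ) ≤ opNorm2inf E * l2 h := by
  refine le_sSup_mul (fun h => linf (h ᵥ* Eᵀ)) (frob Eᵀ) (Real.sqrt_nonneg _)
    (fun x => ?_) (fun c hc x => ?_) h
  · exact (Real.iSup_le (abs_le_l2 _) (l2_nonneg _)).trans (l2_vecMul_le_frob _ _)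
  · simp only [Matrix.smul_vecMul, linf, Pi.smul_apply, smul_eq_mul, abs_mul, abs_of_nonneg hc,
      Real.mul_iSup_of_nonneg hc]

/-! ### Softmax -/

/-- A form of `tanh (x/2) ≤ x/2`. -/
lemma two_mul_exp_sub_one_le {x : ℝ} (hx : 0 ≤ x) :
    2 * (Real.exp x - 1) ≤ x * (Real.exp x + 1) := by
  have hmono : MonotoneOn (fun x : ℝ => x * (Real.exp x + 1) - 2 * (Real.exp x - 1))
      (Set.Ici 0) := by
    have hd : ∀ y : ℝ, HasDerivAt (fun x : ℝ => x * (Real.exp x + 1) - 2 * (Real.exp x - 1))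
        (1 * (Real.exp y + 1) + y * Real.exp y - 2 * Real.exp y) y := fun y =>
      ((hasDerivAt_id y).mul ((Real.hasDerivAt_exp y).add_const 1)).sub
        (((Real.hasDerivAt_exp y).sub_const 1).const_mul 2)
    refine monotoneOn_of_deriv_nonneg (convex_Ici 0) (by fun_prop) (by fun_prop) fun y _ => ?_
    rw [(hd y).deriv]
    -- The derivative is `exp y * (exp (-y) - (1 - y))`, nonnegative by `1 - y ≤ exp (-y)`.
    have h1 := Real.add_one_le_exp (-y)
    have h2 : Real.exp (-y) * Real.exp y = 1 := by rw [← Real.exp_add]; simp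
    nlinarith [mul_le_mul_of_nonneg_right h1 (Real.exp_pos y).le]
  have := hmono (Set.mem_Ici.2 le_rfl) (Set.mem_Ici.2 hx) hx
  simp at this
  linarith

/-- The two-point case of the Lipschitz bound for softmax, in unnormalised weights:
`(a, b)` against `(c, e)`. -/
lemma two_point {a b c e ε : ℝ} (ha : 0 ≤ a) (hb : 0 ≤ b) (hc : 0 ≤ c) (he : 0 ≤ e)
    (hε : 0 ≤ ε) (h1 : a ≤ Real.exp ε * c) (h2 : e ≤ Real.exp ε * b) :
    2 * (a * e - b * c) ≤ ε * ((a + b) * (c + e)) := by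
  have hx0 := Real.sqrt_nonneg (a * e)
  have hy0 := Real.sqrt_nonneg (b * c)
  have hx := Real.sq_sqrt (mul_nonneg ha he)
  have hy := Real.sq_sqrt (mul_nonneg hb hc)
  set x := √(a * e)
  set y := √(b * c)
  have hE := Real.exp_pos ε
  have hxy : x ≤ Real.exp ε * y := by
    apply le_of_sq_le_sq _ (by positivity)
    rw [mul_pow, hx, hy]
    calc a * e ≤ (Real.exp ε * c) * (Real.exp ε * b) := by gcongr
      _ = _ := by ring
  -- Cauchy–Schwarz: `a c + b e ≥ 2 √(a c b e) = 2 x y`.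
  have hcs : (x + y) ^ 2 ≤ (a + b) * (c + e) := by
    have : 2 * (x * y) ≤ a * c + b * e := by
      apply le_of_sq_le_sq _ (by positivity)
      have : (2 * (x * y)) ^ 2 = 4 * ((a * e) * (b * c)) := by rw [← hx, ← hy]; ring
      rw [this]
      nlinarith [sq_nonneg (a * c - b * e)]
    nlinarith
  have hlin : 2 * (x - y) ≤ ε * (x + y) := by
    have ht := two_mul_exp_sub_one_le hε
    rcases le_total 2 ε with h | h
    · nlinarith
    · nlinarith [mul_le_mul_of_nonneg_right hxy (sub_nonneg.2 h)]
  calc 2 * (a * e - b * c) = 2 * (x - y) * (x + y) := by rw [← hx, ← hy]; ring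
    _ ≤ ε * (x + y) * (x + y) := by gcongr
    _ = ε * (x + y) ^ 2 := by ring
    _ ≤ _ := by gcongr

lemma softmax_nonneg {n : ℕ} (z : Fin n → ℝ) (j : Fin n) : 0 ≤ softmax z j := by
  unfold softmax
  positivity

lemma softmax_sum {n : ℕ} (z : Fin n → ℝ) (j : Fin n) : ∑ j, softmax z j = 1 := by
  have : Nonempty (Fin n) := ⟨j⟩
  unfold softmax
  rw [← Finset.sum_div, div_self]
  exact (Finset.sum_pos (fun _ _ => Real.exp_pos _) Finset.univ_nonempty).ne'

/-- Softmax is 1-Lipschitz from `ℓ^∞` to `ℓ¹`. -/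
lemma softmax_l1 {n : ℕ} (z w : Fin n → ℝ) (ε : ℝ) (hε : 0 ≤ ε)
    (h : ∀ j, |z j - w j| ≤ ε) : l1 (fun j => softmax z j - softmax w j) ≤ ε := by
  rcases isEmpty_or_nonempty (Fin n) with hn | hn
  · simpa [l1] using hε
  have hZ : 0 < ∑ k, Real.exp (z k) :=
    Finset.sum_pos (fun _ _ => Real.exp_pos _) Finset.univ_nonempty
  have hY : 0 < ∑ k, Real.exp (w k) :=
    Finset.sum_pos (fun _ _ => Real.exp_pos _) Finset.univ_nonempty
  have hexp : ∀ j, Real.exp (z j) ≤ Real.exp ε * Real.exp (w j) := fun j => by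
    rw [← Real.exp_add]
    exact Real.exp_le_exp.2 (by linarith [(abs_le.1 (h j)).2])
  have hexp' : ∀ j, Real.exp (w j) ≤ Real.exp ε * Real.exp (z j) := fun j => by
    rw [← Real.exp_add]
    exact Real.exp_le_exp.2 (by linarith [(abs_le.1 (h j)).1])
  unfold l1
  let A := Finset.univ.filter fun j => softmax w j ≤ softmax z j
  have e1 : ∑ j ∈ A, |softmax z j - softmax w j|
      = (∑ j ∈ A, Real.exp (z j)) / (∑ k, Real.exp (z k))
        - (∑ j ∈ A, Real.exp (w j)) / (∑ k, Real.exp (w k)) := by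
    rw [Finset.sum_div, Finset.sum_div, ← Finset.sum_sub_distrib]
    refine Finset.sum_congr rfl fun j hj => ?_
    rw [abs_of_nonneg (sub_nonneg.2 (Finset.mem_filter.1 hj).2)]
    rfl
  have e2 : ∑ j ∈ Aᶜ, |softmax z j - softmax w j|
      = (∑ j ∈ Aᶜ, Real.exp (w j)) / (∑ k, Real.exp (w k))
        - (∑ j ∈ Aᶜ, Real.exp (z j)) / (∑ k, Real.exp (z k)) := by
    rw [Finset.sum_div, Finset.sum_div, ← Finset.sum_sub_distrib]
    refine Finset.sum_congr rfl fun j hj => ?_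
    have : softmax z j ≤ softmax w j := by
      by_contra! hlt
      exact (Finset.mem_compl.1 hj) (Finset.mem_filter.2 ⟨Finset.mem_univ _, hlt.le⟩)
    rw [abs_of_nonpos (sub_nonpos.2 this), neg_sub]
    rfl
  rw [← Finset.sum_add_sum_compl A, e1, e2]
  rw [← Finset.sum_add_sum_compl A] at hZ hY
  rw [← Finset.sum_add_sum_compl A (fun k => Real.exp (z k)),
    ← Finset.sum_add_sum_compl A (fun k => Real.exp (w k))]
  have ha : 0 ≤ ∑ j ∈ A, Real.exp (z j) := by positivity
  have hb : 0 ≤ ∑ j ∈ Aᶜ, Real.exp (z j) := by positivity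
  have hc : 0 ≤ ∑ j ∈ A, Real.exp (w j) := by positivity
  have he : 0 ≤ ∑ j ∈ Aᶜ, Real.exp (w j) := by positivity
  have h1 : ∑ j ∈ A, Real.exp (z j) ≤ Real.exp ε * ∑ j ∈ A, Real.exp (w j) := by
    rw [Finset.mul_sum]
    exact Finset.sum_le_sum fun j _ => hexp j
  have h2 : ∑ j ∈ Aᶜ, Real.exp (w j) ≤ Real.exp ε * ∑ j ∈ Aᶜ, Real.exp (z j) := by
    rw [Finset.mul_sum]
    exact Finset.sum_le_sum fun j _ => hexp' j
  have key := two_point ha hb hc he hε h1 h2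
  generalize ∑ j ∈ A, Real.exp (z j) = a at *
  generalize ∑ j ∈ Aᶜ, Real.exp (z j) = b at *
  generalize ∑ j ∈ A, Real.exp (w j) = c at *
  generalize ∑ j ∈ Aᶜ, Real.exp (w j) = e at *
  have : a / (a + b) - c / (c + e) + (e / (c + e) - b / (a + b))
      = 2 * (a * e - b * c) / ((a + b) * (c + e)) := by
    field_simp
    ring
  rw [this, div_le_iff₀ (mul_pos hZ hY)]
  exact key

/-! ### Drift of a token over the stale steps -/

/-- One step of drift: if the images under `W` of two unit vectors have cosine similarity at least
`1 - τ`, then the unit vectors are within `√(2 τ̃)`. -/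
lemma angle_step {d : ℕ} {τ : ℝ} (hτ0 : 0 ≤ τ) (hτ2 : τ < 2)
    (W : Matrix (Fin d) (Fin d) ℝ) (hW : IsUnit W.det) (x y : Fin d → ℝ)
    (hx : l2 x = 1) (hy : l2 y = 1)
    (h : (∑ j, (x ᵥ* W) j * (y ᵥ* W) j) ≥ (1 - τ) * l2 (x ᵥ* W) * l2 (y ᵥ* W)) :
    l2 (x - y) ≤
      Real.sqrt (2 * (2 * τ * condNum W ^ 2 / (2 + τ * (condNum W ^ 2 - 1)))) := by
  have hinv : ∀ z : Fin d → ℝ, l2 z ≤ spec W⁻¹ * l2 (z ᵥ* W) := fun z => by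
    have := spec_bound W⁻¹ (z ᵥ* W)
    rwa [Matrix.vecMul_vecMul, Matrix.mul_nonsing_inv _ hW, Matrix.vecMul_one] at this
  have hpos : ∀ z : Fin d → ℝ, l2 z = 1 → 0 < l2 (z ᵥ* W) := fun z hz => by
    refine (l2_nonneg _).lt_of_ne fun h0 => ?_
    have := hinv z
    rw [← h0, hz] at this
    linarith
  have ha := hpos x hx
  have hb := hpos y hy
  have hn := spec_nonneg W⁻¹
  have hs := spec_nonneg W
  set P := ∑ j, (x ᵥ* W) j * (y ᵥ* W) j with hP
  set a := l2 (x ᵥ* W) with hadef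
  set b := l2 (y ᵥ* W) with hbdef
  set c := ∑ j, x j * y j with hcdef
  have hc : c ≤ 1 ∧ -1 ≤ c := by
    have := abs_le.1 (abs_dot_le x y)
    rw [hx, hy] at this
    exact ⟨by linarith [this.2], by linarith [this.1]⟩
  have h1 : 1 - c ≤ spec W⁻¹ ^ 2 * (a * b - P) := by
    have h := pow_le_pow_left₀ (l2_nonneg _) (hinv (b • x + (-a) • y)) 2
    rw [Matrix.add_vecMul, Matrix.smul_vecMul, Matrix.smul_vecMul, mul_pow, l2_lin_sq, l2_lin_sq,
      hx, hy, ← hP, ← hadef, ← hbdef, ← hcdef] at h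
    have hab : 0 < 2 * (a * b) := by positivity
    refine le_of_mul_le_mul_left ?_ hab
    nlinarith [sq_nonneg (a - b)]
  have h2 : a * b + P ≤ spec W ^ 2 * (1 + c) := by
    have h := pow_le_pow_left₀ (l2_nonneg _) (spec_bound W ((1 : ℝ) • x + (1 : ℝ) • y)) 2
    rw [Matrix.add_vecMul, Matrix.smul_vecMul, Matrix.smul_vecMul, mul_pow, l2_lin_sq, l2_lin_sq,
      hx, hy, ← hP, ← hadef, ← hbdef, ← hcdef] at h
    nlinarith [sq_nonneg (a - b)]
  have h3 : (1 - c) * (2 - τ) ≤ τ * condNum W ^ 2 * (1 + c) := by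
    have hab : 0 < a * b := by positivity
    have e1 : 1 - c ≤ spec W⁻¹ ^ 2 * (τ * (a * b)) :=
      h1.trans (mul_le_mul_of_nonneg_left (by nlinarith) (sq_nonneg _))
    have e2 : (2 - τ) * (a * b) ≤ spec W ^ 2 * (1 + c) := by nlinarith
    calc (1 - c) * (2 - τ) ≤ spec W⁻¹ ^ 2 * (τ * (a * b)) * (2 - τ) :=
          mul_le_mul_of_nonneg_right e1 (by linarith)
      _ = spec W⁻¹ ^ 2 * τ * ((2 - τ) * (a * b)) := by ring
      _ ≤ spec W⁻¹ ^ 2 * τ * (spec W ^ 2 * (1 + c)) :=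
          mul_le_mul_of_nonneg_left e2 (by positivity)
      _ = _ := by unfold condNum; ring
  apply Real.le_sqrt_of_sq_le
  have h4 : l2 (x - y) ^ 2 = 2 * (1 - c) := by
    have := l2_lin_sq 1 (-1) x y
    rw [hx, hy, ← hcdef] at this
    have e : (1 : ℝ) • x + (-1 : ℝ) • y = x - y := by simp [sub_eq_add_neg]
    rw [e] at this
    linarith
  rw [h4]
  have hden : 0 < 2 + τ * (condNum W ^ 2 - 1) := by
    nlinarith [mul_nonneg hτ0 (sq_nonneg (condNum W))]
  refine mul_le_mul_of_nonneg_left ?_ (by norm_num)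
  rw [le_div_iff₀ hden]
  linarith

lemma l2_sub_le_of_steps {d : ℕ} (x : ℕ → Fin d → ℝ) (S : ℝ) (t k : ℕ) (hk : k ≤ t)
    (h : ∀ s, t - k < s → s ≤ t → l2 (x s - x (s - 1)) ≤ S) :
    l2 (x t - x (t - k)) ≤ k * S := by
  induction k with
  | zero => simp [l2]
  | succ k ih =>
    have h1 := ih (by omega) fun s hs hst => h s (by omega) hst
    have h2 := h (t - k) (by omega) (by omega)
    have e : x t - x (t - (k + 1)) = (x t - x (t - k)) + (x (t - k) - x (t - k - 1)) := by
      rw [Nat.sub_sub]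
      abel
    rw [e]
    refine (l2_add_le _ _).trans ?_
    push_cast
    linarith

/-! ### Perturbing the cache -/

/-- Effect on the attention output of moving every token of the cache by at most `D`. -/
lemma attention_bound {B d : ℕ} (WK WV : Matrix (Fin d) (Fin d) ℝ)
    (q : Fin d → ℝ) (x y : Matrix (Fin B) (Fin d) ℝ) (D : ℝ) (hD : 0 ≤ D) (i : Fin B)
    (hy : ∀ j, l2 (y j) = 1) (hxy : ∀ j, l2 (x j - y j) ≤ D) :
    l2 (softmax (fun j => (q ᵥ* (x * WK)ᵀ) j / Real.sqrt d) ᵥ* (x * WV)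
        - softmax (fun j => (q ᵥ* (y * WK)ᵀ) j / Real.sqrt d) ᵥ* (y * WV))
      ≤ (spec WV + spec WV * l2 q * spec WK / Real.sqrt d) * D := by
  have hlog : ∀ j, |(q ᵥ* (x * WK)ᵀ) j / Real.sqrt d - (q ᵥ* (y * WK)ᵀ) j / Real.sqrt d|
      ≤ l2 q * (spec WK * D) / Real.sqrt d := fun j => by
    have e : (q ᵥ* (x * WK)ᵀ) j - (q ᵥ* (y * WK)ᵀ) j
        = ∑ k, q k * ((x j - y j) ᵥ* WK) k := by
      rw [Matrix.sub_vecMul]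
      simp only [Matrix.vecMul, dotProduct, Matrix.transpose_apply, Matrix.mul_apply,
        Pi.sub_apply, mul_sub, Finset.sum_sub_distrib]
    rw [← sub_div, abs_div, abs_of_nonneg (Real.sqrt_nonneg _), e]
    gcongr
    refine (abs_dot_le _ _).trans (mul_le_mul_of_nonneg_left ?_ (l2_nonneg _))
    exact (spec_bound _ _).trans (mul_le_mul_of_nonneg_left (hxy j) (spec_nonneg _))
  have hε : 0 ≤ l2 q * (spec WK * D) / Real.sqrt d :=
    div_nonneg (mul_nonneg (l2_nonneg _) (mul_nonneg (spec_nonneg _) hD)) (Real.sqrt_nonneg _)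
  have hsm := softmax_l1 _ _ _ hε hlog
  have hsum := softmax_sum (fun j => (q ᵥ* (x * WK)ᵀ) j / Real.sqrt d) i
  have hnn := softmax_nonneg (fun j => (q ᵥ* (x * WK)ᵀ) j / Real.sqrt d)
  generalize softmax (fun j => (q ᵥ* (x * WK)ᵀ) j / Real.sqrt d) = a at *
  generalize softmax (fun j => (q ᵥ* (y * WK)ᵀ) j / Real.sqrt d) = a' at *
  have e : a ᵥ* (x * WV) - a' ᵥ* (y * WV)
      = a ᵥ* ((x - y) * WV) + (fun j => a j - a' j) ᵥ* (y * WV) := by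
    have : (fun j => a j - a' j) = a - a' := rfl
    rw [this, Matrix.sub_mul, Matrix.vecMul_sub, Matrix.sub_vecMul]
    abel
  have b1 : l2 (a ᵥ* ((x - y) * WV)) ≤ spec WV * D := by
    refine (l2_vecMul_rows _ _).trans ?_
    calc ∑ j, |a j| * l2 (((x - y) * WV) j) ≤ ∑ j, a j * (spec WV * D) := by
          refine Finset.sum_le_sum fun j _ => ?_
          rw [abs_of_nonneg (hnn j)]
          refine mul_le_mul_of_nonneg_left ?_ (hnn j)
          exact (spec_bound WV (x j - y j)).trans
            (mul_le_mul_of_nonneg_left (hxy j) (spec_nonneg _))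
      _ = spec WV * D := by rw [← Finset.sum_mul, hsum, one_mul]
  have b2 : l2 ((fun j => a j - a' j) ᵥ* (y * WV))
      ≤ l2 q * (spec WK * D) / Real.sqrt d * spec WV := by
    refine (l2_vecMul_rows _ _).trans ?_
    calc ∑ j, |a j - a' j| * l2 ((y * WV) j) ≤ ∑ j, |a j - a' j| * spec WV := by
          refine Finset.sum_le_sum fun j _ => ?_
          refine mul_le_mul_of_nonneg_left ?_ (abs_nonneg _)
          have := spec_bound WV (y j)
          rw [hy, mul_one] at this
          exact this
      _ ≤ _ := by
          rw [← Finset.sum_mul]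
          exact mul_le_mul_of_nonneg_right hsm (spec_nonneg _)
  rw [e]
  refine (l2_add_le _ _).trans ((add_le_add b1 b2).trans (le_of_eq ?_))
  ring

lemma head_bound {d dint m : ℕ} {G : ℝ} (WO : Matrix (Fin d) (Fin d) ℝ)
    (WU : Matrix (Fin d) (Fin dint) ℝ) (WD : Matrix (Fin dint) (Fin d) ℝ)
    (E : Matrix (Fin m) (Fin d) ℝ) (σ : ℝ → ℝ) (hG : 0 ≤ G)
    (hσ : ∀ a b : ℝ, |σ a - σ b| ≤ G * |a - b|) (u v : Fin d → ℝ) :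
    l1 (fun j =>
        softmax (((fun k => σ (((u ᵥ* WO) ᵥ* WU) k)) ᵥ* WD) ᵥ* Eᵀ) j
      - softmax (((fun k => σ (((v ᵥ* WO) ᵥ* WU) k)) ᵥ* WD) ᵥ* Eᵀ) j)
    ≤ opNorm2inf E * (spec WD * (G * (spec WU * (spec WO * l2 (u - v))))) := by
  have hE := opNorm2inf_nonneg E
  have hD := spec_nonneg WD
  have hU := spec_nonneg WU
  have hO := spec_nonneg WO
  have hl := l2_nonneg (u - v)
  refine softmax_l1 _ _ _ (by positivity) fun j => ?_
  rw [← Pi.sub_apply, ← Matrix.sub_vecMul, ← Matrix.sub_vecMul]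
  refine (abs_le_linf _ j).trans ((opNorm2inf_bound _ _).trans ?_)
  gcongr
  refine (spec_bound _ _).trans ?_
  gcongr
  have hs : l2 ((fun k => σ (((u ᵥ* WO) ᵥ* WU) k)) - fun k => σ (((v ᵥ* WO) ᵥ* WU) k))
      ≤ G * l2 (((u - v) ᵥ* WO) ᵥ* WU) := by
    rw [Matrix.sub_vecMul, Matrix.sub_vecMul]
    apply le_of_sq_le_sq _ (mul_nonneg hG (l2_nonneg _))
    rw [mul_pow, l2_sq, l2_sq, Finset.mul_sum]
    refine Finset.sum_le_sum fun k _ => ?_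
    simp only [Pi.sub_apply]
    rw [← mul_pow, sq_le_sq, abs_mul, abs_of_nonneg hG]
    exact hσ _ _
  refine hs.trans ?_
  gcongr
  refine (spec_bound _ _).trans ?_
  gcongr
  exact spec_bound _ _

/-- KV-reuse error under staleness:
`Σ_i ‖p_i − p̂_i‖₁ ≤ √(2τ̃) · B · ‖E‖_{2→∞}‖W_D‖₂ G_σ ‖W_U‖₂‖W_O‖₂
  (‖W_V‖₂ + ‖W_V‖₂‖W_Q‖₂‖W_K‖₂/√d) · ‖Δ‖₂`, where
`τ̃ = 2τκ²/(2 + τ(κ² − 1))`, `κ = κ(W_Q)`, and `‖Δ‖₂ = √(Σ_i δ_i²)`. -/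
theorem kv_reuse_staleness_bound {B d dint m : ℕ} (Gσ τ : ℝ)
    (hτ0 : 0 ≤ τ) (hτ2 : τ < 2)
    (WQ : Matrix (Fin d) (Fin d) ℝ) (hWQ : IsUnit WQ.det)
    (WK WV WO : Matrix (Fin d) (Fin d) ℝ)
    (WU : Matrix (Fin d) (Fin dint) ℝ) (WD : Matrix (Fin dint) (Fin d) ℝ)
    (E : Matrix (Fin m) (Fin d) ℝ) (σ : ℝ → ℝ)
    (hσ : ∀ a b : ℝ, |σ a - σ b| ≤ Gσ * |a - b|)
    (t : ℕ) (X : ℕ → Matrix (Fin B) (Fin d) ℝ)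
    (hrows : ∀ s ≤ t, ∀ i, l2 (X s i) = 1)
    (δ : Fin B → ℕ) (hδ : ∀ i, δ i ≤ t)
    (hcos : ∀ i, ∀ s, t - δ i < s → s ≤ t →
      (∑ j, (X s i ᵥ* WQ) j * (X (s-1) i ᵥ* WQ) j)
        ≥ (1 - τ) * l2 (X s i ᵥ* WQ) * l2 (X (s-1) i ᵥ* WQ)) :
    ∑ i, l1 (fun j =>
        reuseP WO WU WD E σ (X t i ᵥ* WQ) (X t * WK) (X t * WV) j
      - reuseP WO WU WD E σ (X t i ᵥ* WQ)
          (Matrix.of fun i' => X (t - δ i') i' ᵥ* WK)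
          (Matrix.of fun i' => X (t - δ i') i' ᵥ* WV) j)
    ≤ Real.sqrt (2 * (2 * τ * condNum WQ ^ 2 / (2 + τ * (condNum WQ ^ 2 - 1))))
        * B * opNorm2inf E * spec WD * Gσ * spec WU * spec WO
        * (spec WV + spec WV * spec WQ * spec WK / Real.sqrt d)
        * Real.sqrt (∑ i, (δ i : ℝ)^2) := by
  have hG : 0 ≤ Gσ := by
    have := (abs_nonneg _).trans (hσ 1 0)
    simpa using this
  have hstep : ∀ j, l2 (X t j - X (t - δ j) j) ≤ δ j *
      Real.sqrt (2 * (2 * τ * condNum WQ ^ 2 / (2 + τ * (condNum WQ ^ 2 - 1)))) := fun j =>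
    l2_sub_le_of_steps (fun s => X s j) _ t (δ j) (hδ j) fun s hs hst =>
      angle_step hτ0 hτ2 WQ hWQ _ _ (hrows s hst j) (hrows (s - 1) (by omega) j)
        (hcos j s hs hst)
  have hS := Real.sqrt_nonneg (2 * (2 * τ * condNum WQ ^ 2 / (2 + τ * (condNum WQ ^ 2 - 1))))
  generalize Real.sqrt (2 * (2 * τ * condNum WQ ^ 2 / (2 + τ * (condNum WQ ^ 2 - 1)))) = S at *
  have hR := Real.sqrt_nonneg (∑ i, (δ i : ℝ) ^ 2)
  have hmax : ∀ j, (δ j : ℝ) ≤ Real.sqrt (∑ i, (δ i : ℝ) ^ 2) := fun j =>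
    (le_abs_self _).trans (abs_le_l2 (fun i => (δ i : ℝ)) j)
  generalize Real.sqrt (∑ i, (δ i : ℝ) ^ 2) = R at *
  have hE := opNorm2inf_nonneg E
  have hD := spec_nonneg WD
  have hU := spec_nonneg WU
  have hO := spec_nonneg WO
  have hV := spec_nonneg WV
  have hK := spec_nonneg WK
  have hi : ∀ i ∈ Finset.univ, l1 (fun j =>
        reuseP WO WU WD E σ (X t i ᵥ* WQ) (X t * WK) (X t * WV) j
      - reuseP WO WU WD E σ (X t i ᵥ* WQ)
          (Matrix.of fun i' => X (t - δ i') i' ᵥ* WK)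
          (Matrix.of fun i' => X (t - δ i') i' ᵥ* WV) j)
      ≤ opNorm2inf E * (spec WD * (Gσ * (spec WU * (spec WO *
        ((spec WV + spec WV * spec WQ * spec WK / Real.sqrt d) * (R * S)))))) := by
    intro i _
    refine (head_bound WO WU WD E σ hG hσ _ _).trans ?_
    gcongr
    refine (attention_bound WK WV (X t i ᵥ* WQ) (X t) (Matrix.of fun i' => X (t - δ i') i')
      (R * S) (by positivity) i (fun j => hrows _ (by omega) j) fun j =>
        (hstep j).trans (mul_le_mul_of_nonneg_right (hmax j) hS)).trans ?_
    have hq : l2 (X t i ᵥ* WQ) ≤ spec WQ := by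
      simpa [hrows t le_rfl i] using spec_bound WQ (X t i)
    gcongr
  refine (Finset.sum_le_card_nsmul _ _ _ hi).trans (le_of_eq ?_)
  rw [Finset.card_univ, Fintype.card_fin, nsmul_eq_mul]
  ring
end

section
/- Let X, X̂ ∈ ℝ^{B×d} have all rows of ℓ² norm √d, let W_Q, W_K, W_V, W_O ∈ ℝ^{d×d}, and let q ∈ ℝ^d be a row vector with ‖q‖₂ ≤ √d ‖W_Q‖_F. Set K = X W_K, K̂ = X̂ W_K, and V = X W_V. Then ‖( softmax(q Kᵀ / √d) − softmax(q K̂ᵀ / √d) ) V W_O‖₂ ≤ √(B d) · ‖W_O‖_F ‖W_V‖_F ‖W_K‖_F ‖W_Q‖_F · √( Σ_{j=1}^B ‖x_j − x̂_j‖₂² ), where x_j and x̂_j are the j-th rows of X and X̂. -/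
/-!
The bound combines the submultiplicativity of the Frobenius norm with the fact that softmax is
1-Lipschitz for the Euclidean norm (`l2_softmax_sub_le`).

For the latter, let `p = softmax a` and `r = softmax b`. Since `log p - a` and `log r - b` are
constant vectors and `∑ (p - r) = 0`, one has `∑ (p - r) (log p - log r) = ∑ (p - r) (a - b)`.
On `(0, 1]` the logarithm has slope at least one, so the left side dominates `‖p - r‖₂²`, and
Cauchy–Schwarz on the right side gives `‖p - r‖₂ ≤ ‖a - b‖₂`.

The logits differ by `q ((X - X̂) W_K)ᵀ / √d`, of norm at most `‖W_Q‖ ‖W_K‖ ‖X - X̂‖`, where the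
bound on `q` absorbs the factor `1 / √d`; the remaining factor comes from `‖X‖_F = √(B d)`.
-/

open scoped BigOperators
open Matrix

lemma frob_nonneg {m n : ℕ} (W : Matrix (Fin m) (Fin n) ℝ) : 0 ≤ frob W := Real.sqrt_nonneg _

lemma frob_sq {m n : ℕ} (W : Matrix (Fin m) (Fin n) ℝ) :
    frob W ^ 2 = ∑ i, ∑ j, W i j ^ 2 :=
  Real.sq_sqrt (Finset.sum_nonneg fun _ _ => Finset.sum_nonneg fun _ _ => sq_nonneg _)

lemma frob_eq_sqrt_rows {m n : ℕ} (W : Matrix (Fin m) (Fin n) ℝ) :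
    frob W = Real.sqrt (∑ i, l2 (W i) ^ 2) := by
  simp only [frob, l2_sq]

lemma frob_transpose {m n : ℕ} (W : Matrix (Fin m) (Fin n) ℝ) : frob Wᵀ = frob W := by
  simp only [frob, transpose_apply]
  rw [Finset.sum_comm]

lemma l2_vecMul_le {m n : ℕ} (v : Fin m → ℝ) (W : Matrix (Fin m) (Fin n) ℝ) :
    l2 (v ᵥ* W) ≤ l2 v * frob W := by
  refine abs_le_of_sq_le_sq' ?_ (mul_nonneg (l2_nonneg _) (frob_nonneg _)) |>.2
  rw [mul_pow, l2_sq, l2_sq, frob_sq, Finset.sum_comm, Finset.mul_sum]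
  refine Finset.sum_le_sum fun j _ => ?_
  simpa only [vecMul, dotProduct] using
    Finset.sum_mul_sq_le_sq_mul_sq Finset.univ v (fun i => W i j)

lemma frob_mul_le {l m n : ℕ} (A : Matrix (Fin l) (Fin m) ℝ) (W : Matrix (Fin m) (Fin n) ℝ) :
    frob (A * W) ≤ frob A * frob W := by
  refine abs_le_of_sq_le_sq' ?_ (mul_nonneg (frob_nonneg _) (frob_nonneg _)) |>.2
  rw [mul_pow, frob_sq, frob_sq A, Finset.sum_mul]
  refine Finset.sum_le_sum fun i _ => ?_
  have h := pow_le_pow_left₀ (l2_nonneg _) (l2_vecMul_le (A i) W) 2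
  rw [mul_pow, l2_sq, l2_sq] at h
  exact h

/-- On `(0, 1]` the logarithm has slope at least one. -/
lemma sq_sub_le_mul_log_sub {p r : ℝ} (hp : 0 < p) (hp1 : p ≤ 1) (hr : 0 < r) (hr1 : r ≤ 1) :
    (p - r) ^ 2 ≤ (p - r) * (Real.log p - Real.log r) := by
  have key : ∀ {x y : ℝ}, 0 < x → x ≤ 1 → 0 < y → y ≤ x → x - y ≤ Real.log x - Real.log y := by
    intro x y hx hx1 hy hyx
    have h := Real.log_le_sub_one_of_pos (div_pos hy hx)
    rw [Real.log_div hy.ne' hx.ne'] at h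
    have h2 : x - y ≤ (x - y) / x := le_div_self (by linarith) hx hx1
    rw [sub_div, div_self hx.ne'] at h2
    linarith
  rcases le_total r p with h | h
  · nlinarith [key hp hp1 hr h]
  · nlinarith [key hr hr1 hp h]

lemma softmax_pos {n : ℕ} (z : Fin n → ℝ) (j : Fin n) : 0 < softmax z j :=
  div_pos (Real.exp_pos _) (Finset.sum_pos (fun _ _ => Real.exp_pos _) ⟨j, Finset.mem_univ j⟩)

lemma sum_softmax {n : ℕ} [Nonempty (Fin n)] (z : Fin n → ℝ) : ∑ j, softmax z j = 1 := by
  simp only [softmax]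
  rw [← Finset.sum_div]
  exact div_self (Finset.sum_pos (fun _ _ => Real.exp_pos _) Finset.univ_nonempty).ne'

lemma softmax_le_one {n : ℕ} (z : Fin n → ℝ) (j : Fin n) : softmax z j ≤ 1 := by
  have : Nonempty (Fin n) := ⟨j⟩
  rw [← sum_softmax z]
  exact Finset.single_le_sum (fun i _ => (softmax_pos z i).le) (Finset.mem_univ j)

lemma log_softmax {n : ℕ} (z : Fin n → ℝ) (j : Fin n) :
    Real.log (softmax z j) = z j - Real.log (∑ k, Real.exp (z k)) := by
  rw [softmax, Real.log_div (Real.exp_pos _).ne'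
    (Finset.sum_pos (fun _ _ => Real.exp_pos _) ⟨j, Finset.mem_univ j⟩).ne', Real.log_exp]

/-- Softmax is 1-Lipschitz for the Euclidean norm. -/
lemma l2_softmax_sub_le {n : ℕ} (a b : Fin n → ℝ) :
    l2 (fun j => softmax a j - softmax b j) ≤ l2 (fun j => a j - b j) := by
  rcases isEmpty_or_nonempty (Fin n) with hn | hn
  · simp [l2]
  set u : Fin n → ℝ := fun j => softmax a j - softmax b j with hu
  have hsum : ∑ j, u j = 0 := by
    simp only [hu, Finset.sum_sub_distrib, sum_softmax, sub_self]
  -- Cocoercivity: the log-normalizers contribute a constant, which `u` annihilates.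
  have hco : l2 u ^ 2 ≤ ∑ j, u j * (a j - b j) := by
    rw [l2_sq]
    calc ∑ j, u j ^ 2
        ≤ ∑ j, u j * (Real.log (softmax a j) - Real.log (softmax b j)) :=
          Finset.sum_le_sum fun j _ => sq_sub_le_mul_log_sub (softmax_pos a j)
            (softmax_le_one a j) (softmax_pos b j) (softmax_le_one b j)
      _ = ∑ j, (u j * (a j - b j) - u j *
            (Real.log (∑ k, Real.exp (a k)) - Real.log (∑ k, Real.exp (b k)))) := by
          refine Finset.sum_congr rfl fun j _ => ?_
          rw [log_softmax, log_softmax]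
          ring
      _ = ∑ j, u j * (a j - b j) := by
          rw [Finset.sum_sub_distrib, ← Finset.sum_mul, hsum, zero_mul, sub_zero]
  have hcs : ∑ j, u j * (a j - b j) ≤ l2 u * l2 (fun j => a j - b j) :=
    Real.sum_mul_le_sqrt_mul_sqrt _ _ _
  rcases (l2_nonneg u).eq_or_lt with h0 | h0
  · rw [← h0]
    exact l2_nonneg _
  · refine le_of_mul_le_mul_left ?_ h0
    rw [← sq]
    exact hco.trans hcs

lemma l2_div {n : ℕ} (v : Fin n → ℝ) {c : ℝ} (hc : 0 ≤ c) :
    l2 (fun j => v j / c) = l2 v / c := by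
  simp only [l2, div_pow]
  rw [← Finset.sum_div, Real.sqrt_div' _ (sq_nonneg c), Real.sqrt_sq hc]

/-- stale-key softmax perturbation bound:
`‖(softmax(qKᵀ/√d) − softmax(qK̂ᵀ/√d)) V W_O‖₂
  ≤ √(Bd)·‖W_O‖_F‖W_V‖_F‖W_K‖_F‖W_Q‖_F·√(Σ_j ‖x_j − x̂_j‖₂²)`. -/
theorem stale_key_softmax_bound {B d : ℕ}
    (X Xh : Matrix (Fin B) (Fin d) ℝ)
    (hX : ∀ i, l2 (X i) = Real.sqrt d) (hXh : ∀ i, l2 (Xh i) = Real.sqrt d)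
    (WQ WK WV WO : Matrix (Fin d) (Fin d) ℝ)
    (q : Fin d → ℝ) (hq : l2 q ≤ Real.sqrt d * frob WQ) :
    l2 (((fun j =>
          softmax (fun j' => (q ᵥ* (X * WK)ᵀ) j' / Real.sqrt d) j
        - softmax (fun j' => (q ᵥ* (Xh * WK)ᵀ) j' / Real.sqrt d) j)
        ᵥ* (X * WV)) ᵥ* WO)
    ≤ Real.sqrt (B * d) * frob WO * frob WV * frob WK * frob WQ
        * Real.sqrt (∑ j, l2 (fun k => X j k - Xh j k) ^ 2) := by
  have hfX : frob X = Real.sqrt (B * d) := by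
    rw [frob_eq_sqrt_rows]
    simp [hX]
  have hfD : frob (X - Xh) = Real.sqrt (∑ j, l2 (fun k => X j k - Xh j k) ^ 2) :=
    frob_eq_sqrt_rows _
  rw [← hfX, ← hfD]
  have hs : (0 : ℝ) ≤ Real.sqrt d := Real.sqrt_nonneg _
  have hlogits : l2 (fun j => (q ᵥ* (X * WK)ᵀ) j / Real.sqrt d
      - (q ᵥ* (Xh * WK)ᵀ) j / Real.sqrt d) ≤ frob WQ * (frob (X - Xh) * frob WK) := by
    have heq : (fun j => (q ᵥ* (X * WK)ᵀ) j / Real.sqrt d - (q ᵥ* (Xh * WK)ᵀ) j / Real.sqrt d)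
        = fun j => (q ᵥ* ((X - Xh) * WK)ᵀ) j / Real.sqrt d := by
      funext j
      rw [Matrix.sub_mul, transpose_sub, vecMul_sub, Pi.sub_apply, sub_div]
    rw [heq, l2_div _ hs]
    -- For `d = 0` the quotient is zero, so no positivity of `d` is needed.
    refine div_le_of_le_mul₀ hs (mul_nonneg (frob_nonneg _)
      (mul_nonneg (frob_nonneg _) (frob_nonneg _))) ?_
    calc l2 (q ᵥ* ((X - Xh) * WK)ᵀ)
        ≤ l2 q * frob ((X - Xh) * WK) := by
          rw [← frob_transpose ((X - Xh) * WK)]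
          exact l2_vecMul_le _ _
      _ ≤ (Real.sqrt d * frob WQ) * (frob (X - Xh) * frob WK) :=
          mul_le_mul hq (frob_mul_le _ _) (frob_nonneg _) (mul_nonneg hs (frob_nonneg _))
      _ = frob WQ * (frob (X - Xh) * frob WK) * Real.sqrt d := by ring
  have hsoft := (l2_softmax_sub_le (fun j' => (q ᵥ* (X * WK)ᵀ) j' / Real.sqrt d)
    (fun j' => (q ᵥ* (Xh * WK)ᵀ) j' / Real.sqrt d)).trans hlogits
  refine (l2_vecMul_le _ _).trans ?_
  refine (mul_le_mul_of_nonneg_right ((l2_vecMul_le _ _).trans (mul_le_mul hsoft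
    (frob_mul_le X WV) (frob_nonneg _) ((l2_nonneg _).trans hsoft))) (frob_nonneg _)).trans
    (le_of_eq ?_)
  ring
end
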